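/- Let λ ≥ 2 and let θ ∈ S¹ be λ-renormalizable, with λ-shrinking sequence ⟨g_n⟩ and sign sequence ⟨s_n⟩. Let v ∈ ℝ² be a nonzero vector, and let θ·v denote the Euclidean dot product. Then: (a) if θ·v > 0, there is an i ≥ 0 such that for every critical time n > i, ρ_λ(γ(g_n))v ∈ Q_{s_n}; (b) if θ·v < 0, there is an i ≥ 0 such that for every critical time n > i, −ρ_λ(γ(g_n))v ∈ Q_{s_n}; (c) if θ·v = 0, then there is a fixed choice of sign ε ∈ {+1, −1} such that ρ_λ(γ(g_n))v ∈ Q_{r^{ε}(s_n)} for all n ≥ 0. -/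

import Mathlib

noncomputable section

abbrev F2 := FreeGroup Bool

def gh : F2 := FreeGroup.of true
def gv : F2 := FreeGroup.of false

def hmat (l : ℝ) : Matrix.SpecialLinearGroup (Fin 2) ℝ :=
  ⟨!![1, l; 0, 1], by norm_num [Matrix.det_fin_two_of]⟩

def vmat (l : ℝ) : Matrix.SpecialLinearGroup (Fin 2) ℝ :=
  ⟨!![1, 0; l, 1], by norm_num [Matrix.det_fin_two_of]⟩

def rho (l : ℝ) : F2 →* Matrix.SpecialLinearGroup (Fin 2) ℝ :=
  FreeGroup.lift fun b => if b then hmat l else vmat l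

def act (l : ℝ) (g : F2) (x : Fin 2 → ℝ) : Fin 2 → ℝ :=
  (rho l g).val.mulVec x

def nrm (x : Fin 2 → ℝ) : ℝ := Real.sqrt (x 0 ^ 2 + x 1 ^ 2)

def Circ : Set (Fin 2 → ℝ) := {x | nrm x = 1}

def gens : Set F2 := {gh, gv, gh⁻¹, gv⁻¹}

def ShrinkSet (l : ℝ) (g : F2) : Set (Fin 2 → ℝ) :=
  {x | x ∈ Circ ∧ nrm (act l g x) < 1}

def ExpSet (l : ℝ) (g : F2) : Set (Fin 2 → ℝ) :=
  {x | x ∈ Circ ∧ 1 < nrm (act l g x)}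

def IsGeodesicRay (g : ℕ → F2) : Prop :=
  g 0 = 1 ∧ (∀ n, g (n + 1) * (g n)⁻¹ ∈ gens) ∧ ∀ n, g (n + 2) * (g n)⁻¹ ≠ 1

def IsGeodesicSegment (g : ℕ → F2) (N : ℕ) : Prop :=
  g 0 = 1 ∧ (∀ n, n + 1 ≤ N → g (n + 1) * (g n)⁻¹ ∈ gens) ∧
    ∀ n, n + 2 ≤ N → g (n + 2) * (g n)⁻¹ ≠ 1

def IsShrinkingSeq (l : ℝ) (g : ℕ → F2) (θ : Fin 2 → ℝ) : Prop :=
  ∀ ε : ℝ, 0 < ε → ∃ i : ℕ, nrm (act l (g i) θ) < ε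

def Shrinkable (l : ℝ) (θ : Fin 2 → ℝ) : Prop :=
  ∀ ε : ℝ, 0 < ε → ∃ g : F2, nrm (act l g θ) < ε

def Renormalizable (l : ℝ) (θ : Fin 2 → ℝ) : Prop :=
  Shrinkable l θ ∧ ∀ k : F2, ∀ c : ℝ, act l (k * (gh * gv⁻¹) * k⁻¹) θ ≠ c • θ

abbrev SP := Bool × Bool

def Quad (s : SP) : Set (Fin 2 → ℝ) :=
  {x | (if s.1 then 0 < x 0 else x 0 < 0) ∧ (if s.2 then 0 < x 1 else x 1 < 0)}

def letterSigma : Bool × Bool → SP → SP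
  | (true, true), s => (s.2, s.2)
  | (false, true), s => (s.1, s.1)
  | (true, false), s => (!s.2, s.2)
  | (false, false), s => (s.1, !s.1)

def SigmaAct (g : F2) : SP → SP :=
  (FreeGroup.toWord g).foldr (fun w acc => letterSigma w ∘ acc) id

def gammaAut : F2 →* F2 := FreeGroup.lift fun b => if b then gv⁻¹ else gh⁻¹

def rPerm (s : SP) : SP := (!s.2, s.1)

def rPermInv (s : SP) : SP := (s.2, !s.1)

def shiftRay (g : ℕ → F2) : ℕ → F2 := fun n => g (n + 1) * (g 1)⁻¹

def TailEquiv (g g' : ℕ → F2) : Prop :=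
  ∃ m n : ℕ, shiftRay^[m] g = shiftRay^[n] g'

def seqPow (a : F2) : ℕ → F2 := fun n => a ^ n

def seqPer (a b : F2) : ℕ → F2 := fun n =>
  if n % 2 = 0 then (b * a) ^ (n / 2) else a * (b * a) ^ (n / 2)

def Cond1 (g : ℕ → F2) : Prop :=
  ¬ TailEquiv g (seqPow gh) ∧ ¬ TailEquiv g (seqPow gh⁻¹) ∧
    ¬ TailEquiv g (seqPow gv) ∧ ¬ TailEquiv g (seqPow gv⁻¹)

def Cond2 (g : ℕ → F2) : Prop :=
  ¬ TailEquiv g (seqPer gh gv⁻¹) ∧ ¬ TailEquiv g (seqPer gh⁻¹ gv)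

def adjSum {V : Type} (G : SimpleGraph V) (f : V → ℝ) (v : V) : ℝ :=
  ∑ᶠ w ∈ G.neighborSet v, f w

def BoundedValance {V : Type} (G : SimpleGraph V) : Prop :=
  ∃ D : ℕ, ∀ v, (G.neighborSet v).Finite ∧ (G.neighborSet v).ncard ≤ D

def BipartWith {V : Type} (G : SimpleGraph V) (A : Set V) : Prop :=
  ∀ v w, G.Adj v w → (v ∈ A ↔ w ∉ A)

def Hop {V : Type} (G : SimpleGraph V) (A : Set V) (k : ℤ) (f : V → ℝ) : V → ℝ :=
  fun v => f v + (k : ℝ) * Set.indicator A (adjSum G f) v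

def Vop {V : Type} (G : SimpleGraph V) (A : Set V) (k : ℤ) (f : V → ℝ) : V → ℝ :=
  fun v => f v + (k : ℝ) * Set.indicator Aᶜ (adjSum G f) v

def QuadV {V : Type} (A : Set V) (s : SP) : Set (V → ℝ) :=
  {f | (∀ v ∈ A, f v = 0 ∨ (if s.1 then 0 < f v else f v < 0)) ∧
       ∀ v, v ∉ A → f v = 0 ∨ (if s.2 then 0 < f v else f v < 0)}

def valance {V : Type} (G : SimpleGraph V) (v : V) : ℕ := (G.neighborSet v).ncard

def evec {V : Type} (v : V) : V → ℝ := Set.indicator {v} 1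

def InSpoke {V : Type} (G : SimpleGraph V) (x : V) : Prop :=
  ∃ k : ℕ, 2 ≤ k ∧ ∃ c : ℕ → V,
    (∀ i j, 1 ≤ i → i ≤ k → 1 ≤ j → j ≤ k → c i = c j → i = j) ∧
    valance G (c 1) = 1 ∧
    (∀ i, 2 ≤ i → i ≤ k - 1 →
      valance G (c i) = 2 ∧ G.Adj (c i) (c (i - 1)) ∧ G.Adj (c i) (c (i + 1))) ∧
    ∃ i, 1 ≤ i ∧ i ≤ k ∧ x = c i

/-- Good states. -/
def GoodSt (l x y a b : ℝ) : Prop :=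
  (0 < a ∧ 0 < b) ∨ (0 < b ∧ 0 < a + b ∧ l * x < 2 * y) ∨ (0 < a ∧ 0 < a + b ∧ l * y < 2 * x)

/-- Normalised horizontal step. -/
def HN (l x y a b x' y' a' b' : ℝ) : Prop :=
  l * y < 2 * x ∧ y' = y ∧ b' = b + l * a ∧
    ((x' = x - l * y ∧ a' = a) ∨ (x' = l * y - x ∧ a' = -a))

theorem GoodSt.swap {l x y a b : ℝ} (h : GoodSt l x y a b) : GoodSt l y x b a := by
  unfold GoodSt at *
  rcases h with h | h | h
  · exact Or.inl ⟨h.2, h.1⟩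
  · exact Or.inr (Or.inr ⟨h.1, by linarith [h.2.1], h.2.2⟩)
  · exact Or.inr (Or.inl ⟨h.1, by linarith [h.2.1], h.2.2⟩)

theorem good_step_H {l x y a b x' y' a' b' : ℝ} (hl : 2 ≤ l) (hx : 0 < x) (hy : 0 < y)
    (hx' : 0 < x') (hS : l * x' < 2 * y' ∨ l * y' < 2 * x')
    (h : HN l x y a b x' y' a' b') (hG : GoodSt l x y a b) : GoodSt l x' y' a' b' := by
  obtain ⟨h1, rfl, rfl, h2⟩ := h
  have hxy : y' < x := by nlinarith
  have hab : 0 < a ∧ 0 < a + b := by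
    rcases hG with h | h | h
    · exact ⟨h.1, by linarith [h.1, h.2]⟩
    · exfalso; nlinarith [h.2.2]
    · exact ⟨h.1, h.2.1⟩
  have hla : 2 * a ≤ l * a := mul_le_mul_of_nonneg_right hl hab.1.le
  rcases h2 with ⟨rfl, rfl⟩ | ⟨rfl, rfl⟩
  · left; exact ⟨hab.1, by linarith [hab.1, hab.2]⟩
  · right; left
    have hb : 0 < b + l * a := by linarith [hab.1, hab.2]
    rcases hG with h | h | h
    · refine ⟨hb, by linarith [h.1, h.2], ?_⟩
      rcases hS with h | h
      · exact h
      · exfalso; linarith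
    · exfalso; nlinarith [h.2.2]
    · refine ⟨hb, by linarith [h.1, h.2.1], ?_⟩
      rcases hS with h | h
      · exact h
      · exfalso; linarith

theorem good_crit_H {l x y a b x' y' a' b' : ℝ} (hl : 2 ≤ l) (hx : 0 < x) (hy : 0 < y)
    (h : HN l x y a b x' y' a' b') (hc : a' = a) (hG : GoodSt l x y a b) : 0 < a' ∧ 0 < b' := by
  obtain ⟨h1, rfl, rfl, h2⟩ := h
  have hab : 0 < a ∧ 0 < a + b := by
    rcases hG with h | h | h
    · exact ⟨h.1, by linarith [h.1, h.2]⟩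
    · exfalso; nlinarith [h.2.2]
    · exact ⟨h.1, h.2.1⟩
  have hla : 2 * a ≤ l * a := mul_le_mul_of_nonneg_right hl hab.1.le
  rw [hc]
  exact ⟨hab.1, by linarith [hab.1, hab.2]⟩

theorem bad_step_H {l x y a b x' y' a' b' : ℝ} (hl : 2 ≤ l) (hx : 0 < x) (hy : 0 < y)
    (hx' : 0 < x') (hS : l * x' < 2 * y' ∨ l * y' < 2 * x')
    (hd : 0 < a * x + b * y) (hd' : 0 < a' * x' + b' * y')
    (h : HN l x y a b x' y' a' b') (hG : ¬ GoodSt l x y a b) (hG' : ¬ GoodSt l x' y' a' b') :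
    |a'| ≤ |a| ∧ |b'| ≤ |b| := by
  obtain ⟨h1, rfl, rfl, h2⟩ := h
  have ha : |a'| = |a| := by
    rcases h2 with ⟨_, rfl⟩ | ⟨_, rfl⟩ <;> simp
  refine ⟨ha.le, ?_⟩
  by_cases ha0 : a ≤ 0
  · have hb : 0 < b := by
      by_contra hb
      push Not at hb
      nlinarith
    rw [abs_of_pos hb]
    rw [abs_le]
    refine ⟨?_, by nlinarith⟩
    rcases h2 with ⟨rfl, rfl⟩ | ⟨rfl, rfl⟩
    · have : 0 < b + l * a' := by
        by_contra hb
        push Not at hb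
        nlinarith
      linarith
    · -- x' = l*y - x
      by_contra hcon
      push Not at hcon
      -- 2 b < - l a
      have e1 : -a * (l * y' - x) ≤ -a * (l * y' / 2) :=
        mul_le_mul_of_nonneg_left (by linarith) (by linarith)
      have e2 : (2 * b + l * a) * y' < 0 := mul_neg_of_neg_of_pos (by linarith) hy
      have e3 : -a * (l * y' / 2) + (b + l * a) * y' = (2 * b + l * a) * y' / 2 := by ring
      linarith
  · push Not at ha0
    have hb : b ≤ 0 := by
      by_contra hb
      push Not at hb
      exact hG (Or.inl ⟨ha0, hb⟩)
    have hab : a + b ≤ 0 := by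
      by_contra hab
      push Not at hab
      exact hG (Or.inr (Or.inr ⟨ha0, hab, h1⟩))
    have hla : 2 * a ≤ l * a := mul_le_mul_of_nonneg_right hl ha0.le
    rw [abs_of_nonpos hb, abs_le]
    refine ⟨by linarith, ?_⟩
    by_contra hcon
    push Not at hcon
    apply hG'
    rcases h2 with ⟨rfl, rfl⟩ | ⟨rfl, rfl⟩
    · left; exact ⟨ha0, by linarith⟩
    · right; left
      refine ⟨by linarith, by linarith, ?_⟩
      rcases hS with h | h
      · exact h
      · exfalso; linarith

/-- real sign -/
def sg (b : Bool) : ℝ := if b then 1 else -1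

theorem sg_cases (b : Bool) : sg b = 1 ∨ sg b = -1 := by
  cases b <;> simp [sg]

theorem sg_inj {b c : Bool} (h : sg b = sg c) : b = c := by
  revert h
  cases b <;> cases c <;> norm_num [sg]

theorem quad_iff (s : SP) (z : Fin 2 → ℝ) :
    z ∈ Quad s ↔ 0 < sg s.1 * z 0 ∧ 0 < sg s.2 * z 1 := by
  obtain ⟨b, c⟩ := s
  cases b <;> cases c <;> simp [Quad, sg]

/-- horizontal step of pairs; `e` is the exponent -/
def HS (l e w0 w1 u0 u1 w0' w1' u0' u1' : ℝ) : Prop :=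
  w0' = w0 + e * l * w1 ∧ w1' = w1 ∧ u0' = u0 ∧ u1' = u1 - e * l * u0

theorem HS_norm {l e w0 w1 u0 u1 w0' w1' u0' u1' p q p' q' : ℝ} (hl : 2 ≤ l)
    (he : e = 1 ∨ e = -1)
    (hp : p = 1 ∨ p = -1) (hq : q = 1 ∨ q = -1) (hp' : p' = 1 ∨ p' = -1)
    (hq' : q' = 1 ∨ q' = -1)
    (h0 : 0 < p * w0) (h1 : 0 < q * w1) (h0' : 0 < p' * w0') (h1' : 0 < q' * w1')
    (h : HS l e w0 w1 u0 u1 w0' w1' u0' u1') (hsh : w0' ^ 2 + w1' ^ 2 < w0 ^ 2 + w1 ^ 2) :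
    HN l (p * w0) (q * w1) (p * u0) (q * u1) (p' * w0') (q' * w1') (p' * u0') (q' * u1') ∧
    q' = q := by
  obtain ⟨rfl, rfl, rfl, rfl⟩ := h
  have hqq : q' = q := by
    rcases hq with rfl | rfl <;> rcases hq' with rfl | rfl <;> first | rfl | (exfalso; linarith)
  subst hqq
  have hlp : 0 < l := by linarith
  have key : e = -(p * q') ∧ l * (q' * w1') < 2 * (p * w0) := by
    have A : e * l * w1' * (2 * w0 + e * l * w1') < 0 := by nlinarith
    have hy : 0 < l * (q' * w1') := mul_pos hlp h1
    have B : (e * p * q') * (l * (q' * w1')) * (2 * (p * w0) + (e * p * q') * (l * (q' * w1'))) < 0 := by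
      rcases hp with rfl | rfl <;> rcases hq with rfl | rfl <;> rcases he with rfl | rfl <;>
        linarith
    have C : e * p * q' = 1 ∨ e * p * q' = -1 := by
      rcases hp with rfl | rfl <;> rcases hq with rfl | rfl <;> rcases he with rfl | rfl <;> norm_num
    rcases C with C | C
    · exfalso
      rw [C] at B
      nlinarith [mul_pos hy h0, mul_pos hy hy]
    · constructor
      · rcases hp with rfl | rfl <;> rcases hq with rfl | rfl <;> linarith
      · rw [C] at B
        by_contra hcon
        push Not at hcon
        nlinarith
  obtain ⟨rfl, k2⟩ := key
  refine ⟨⟨k2, rfl, ?_, ?_⟩, rfl⟩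
  · rcases hp with rfl | rfl <;> rcases hq with rfl | rfl <;> ring
  · by_cases hpp : p' = p
    · left; subst hpp
      refine ⟨?_, rfl⟩
      rcases hp with rfl | rfl <;> rcases hq with rfl | rfl <;> ring
    · right
      have : p' = -p := by
        rcases hp with rfl | rfl <;> rcases hp' with rfl | rfl <;>
          first | (exact absurd rfl hpp) | norm_num
      subst this
      refine ⟨?_, by ring⟩
      rcases hp with rfl | rfl <;> rcases hq with rfl | rfl <;> ring

theorem shr_aux {l x y : ℝ} (hl : 2 ≤ l) (h : l * y ^ 2 ≤ 2 * (x * y)) :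
    2 * (x * y) ≤ l * x ^ 2 := by
  have : y ^ 2 ≤ x ^ 2 := by nlinarith [sq_nonneg (x - y), sq_nonneg y]
  nlinarith [sq_nonneg (x - y), sq_nonneg x]

/-- The step relation on w with a kind (true = horizontal) and exponent. -/
def WS (l : ℝ) (k : Bool) (e w0 w1 w0' w1' : ℝ) : Prop :=
  if k then w0' = w0 + e * l * w1 ∧ w1' = w1 else w0' = w0 ∧ w1' = w1 + e * l * w0

theorem expand_aux {l e e' a b a' b' a'' b'' : ℝ} {k k' : Bool} (hl : 2 ≤ l)
    (he : e = 1 ∨ e = -1) (he' : e' = 1 ∨ e' = -1)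
    (h : WS l k e a b a' b') (h' : WS l k' e' a' b' a'' b'')
    (hnb : ¬ (k' = k ∧ e' = -e)) (hN : a ^ 2 + b ^ 2 ≤ a' ^ 2 + b' ^ 2) :
    a' ^ 2 + b' ^ 2 ≤ a'' ^ 2 + b'' ^ 2 := by
  have hlp : 0 < l := by linarith
  have gen : ∀ x y : ℝ, x ^ 2 ≤ (x + e * l * y) ^ 2 → 
      l * (l * y ^ 2) ≤ l * (2 * ((e * (x + e * l * y)) * y)) := by
    intro x y hh
    rcases he with rfl | rfl <;> nlinarith
  have ee : e' = e ∨ e' = -e := by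
    rcases he with rfl | rfl <;> rcases he' with rfl | rfl <;> norm_num
  have he2 : e * e = 1 := by rcases he with rfl | rfl <;> norm_num
  have main : ∀ x y : ℝ, l * y ^ 2 ≤ 2 * ((e * x) * y) →
      x ^ 2 ≤ (x + e * l * y) ^ 2 ∧ y ^ 2 ≤ (y + e' * l * x) ^ 2 := by
    intro x y hh
    have h2 := shr_aux hl hh
    have e1 : (e * x) ^ 2 = x ^ 2 := by rcases he with rfl | rfl <;> ring
    rw [e1] at h2
    have hpos : 0 ≤ e * x * y := by nlinarith [mul_nonneg hlp.le (sq_nonneg y)]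
    constructor
    · have : (x + e * l * y) ^ 2 = x ^ 2 + 2 * l * (e * x * y) + (e * e) * (l * y) ^ 2 := by ring
      rw [this, he2]
      have := mul_nonneg hlp.le hpos
      nlinarith [sq_nonneg (l * y)]
    · rcases ee with rfl | rfl
      · have : (y + e' * l * x) ^ 2 = y ^ 2 + 2 * l * (e' * x * y) + (e' * e') * (l * x) ^ 2 := by ring
        rw [this, he2]
        have := mul_nonneg hlp.le hpos
        nlinarith [sq_nonneg (l * x)]
      · have : (y + -e * l * x) ^ 2 = y ^ 2 + l * ((e * e) * (l * x ^ 2) - 2 * (e * x * y)) := by ring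
        rw [this, he2]
        have := mul_nonneg hlp.le (sub_nonneg.2 h2)
        nlinarith
  cases k <;> cases k' <;> simp only [WS, if_true, if_false, Bool.false_eq_true] at h h' <;>
    obtain ⟨rfl, rfl⟩ := h <;> obtain ⟨rfl, rfl⟩ := h'
  · have e1 : e' = e := by
      rcases ee with h | h
      · exact h
      · exact absurd ⟨rfl, h⟩ hnb
    rw [e1]
    have := (main _ _ (le_of_mul_le_mul_left (gen b a'' (by linarith)) hlp)).1
    linarith
  · have := (main _ _ (le_of_mul_le_mul_left (gen b a' (by linarith)) hlp)).2
    linarith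
  · have := (main _ _ (le_of_mul_le_mul_left (gen a b' (by linarith)) hlp)).2
    linarith
  · have e1 : e' = e := by
      rcases ee with h | h
      · exact h
      · exact absurd ⟨rfl, h⟩ hnb
    rw [e1]
    have := (main _ _ (le_of_mul_le_mul_left (gen a b'' (by linarith)) hlp)).1
    linarith

/-- Full step relation. -/
def FS (l : ℝ) (k : Bool) (e : ℝ) (w u w' u' : Fin 2 → ℝ) : Prop :=
  if k then HS l e (w 0) (w 1) (u 0) (u 1) (w' 0) (w' 1) (u' 0) (u' 1)
  else HS l e (w 1) (w 0) (u 1) (u 0) (w' 1) (w' 0) (u' 1) (u' 0)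

theorem act_mul (l : ℝ) (a b : F2) (x : Fin 2 → ℝ) : act l (a * b) x = act l a (act l b x) := by
  simp only [act, map_mul, Matrix.SpecialLinearGroup.coe_mul, Matrix.mulVec_mulVec]

theorem act_one (l : ℝ) (x : Fin 2 → ℝ) : act l 1 x = x := by
  simp [act]

theorem act_neg (l : ℝ) (a : F2) (x : Fin 2 → ℝ) : act l a (-x) = -act l a x := by
  simp [act, Matrix.mulVec_neg]

theorem act_gh (l : ℝ) (x : Fin 2 → ℝ) : act l gh x = ![x 0 + l * x 1, x 1] := by
  ext i; fin_cases i <;> simp [act, gh, rho, hmat, Matrix.mulVec, dotProduct, Fin.sum_univ_two]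

theorem act_gv (l : ℝ) (x : Fin 2 → ℝ) : act l gv x = ![x 0, x 1 + l * x 0] := by
  ext i; fin_cases i <;> simp [act, gv, rho, vmat, Matrix.mulVec, dotProduct, Fin.sum_univ_two, add_comm]

theorem act_gh_inv (l : ℝ) (x : Fin 2 → ℝ) : act l gh⁻¹ x = ![x 0 - l * x 1, x 1] := by
  have h : x = act l gh ![x 0 - l * x 1, x 1] := by
    rw [act_gh]; ext i; fin_cases i <;> simp
  conv_lhs => rw [h]
  rw [← act_mul, inv_mul_cancel, act_one]

theorem act_gv_inv (l : ℝ) (x : Fin 2 → ℝ) : act l gv⁻¹ x = ![x 0, x 1 - l * x 0] := by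
  have h : x = act l gv ![x 0, x 1 - l * x 0] := by
    rw [act_gv]; ext i; fin_cases i <;> simp
  conv_lhs => rw [h]
  rw [← act_mul, inv_mul_cancel, act_one]

theorem gam_gh : gammaAut gh = gv⁻¹ := by simp [gammaAut, gh]

theorem gam_gv : gammaAut gv = gh⁻¹ := by simp [gammaAut, gv]

/-- generator from kind and exponent sign -/
def gen (k c : Bool) : F2 :=
  if k then (if c then gh else gh⁻¹) else (if c then gv else gv⁻¹)

theorem gens_gen {a : F2} (h : a ∈ gens) : ∃ k c, a = gen k c := by
  simp only [gens, Set.mem_insert_iff, Set.mem_singleton_iff] at h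
  rcases h with rfl | rfl | rfl | rfl
  · exact ⟨true, true, by simp [gen]⟩
  · exact ⟨false, true, by simp [gen]⟩
  · exact ⟨true, false, by simp [gen]⟩
  · exact ⟨false, false, by simp [gen]⟩

theorem gen_FS (l : ℝ) (k c : Bool) (b : F2) (x u : Fin 2 → ℝ) :
    FS l k (sg c) (act l b x) (act l (gammaAut b) u) (act l (gen k c * b) x)
      (act l (gammaAut (gen k c * b)) u) := by
  cases k <;> cases c <;>
    simp [FS, HS, gen, act_mul, gam_gh, gam_gv, act_gh, act_gv, act_gh_inv, act_gv_inv, sg] <;> ring_nf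

theorem FS_WS {l : ℝ} {k : Bool} {e : ℝ} {w u w' u' : Fin 2 → ℝ} (h : FS l k e w u w' u') :
    WS l k e (w 0) (w 1) (w' 0) (w' 1) := by
  cases k <;> simp only [FS, HS, WS, if_true, if_false, Bool.false_eq_true] at *
  · exact ⟨h.2.1, h.1⟩
  · exact ⟨h.1, h.2.1⟩

theorem FS_dot {l : ℝ} {k : Bool} {e : ℝ} {w u w' u' : Fin 2 → ℝ} (h : FS l k e w u w' u') :
    w' 0 * u' 0 + w' 1 * u' 1 = w 0 * u 0 + w 1 * u 1 := by
  cases k <;> simp only [FS, HS, if_true, if_false, Bool.false_eq_true] at h <;>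
    obtain ⟨h1, h2, h3, h4⟩ := h <;> rw [h1, h2, h3, h4] <;> ring

theorem FS_rot {l : ℝ} {k : Bool} {e c : ℝ} {w u w' u' : Fin 2 → ℝ} (h : FS l k e w u w' u')
    (h0 : u 0 = -c * w 1) (h1 : u 1 = c * w 0) : u' 0 = -c * w' 1 ∧ u' 1 = c * w' 0 := by
  cases k <;> simp only [FS, HS, if_true, if_false, Bool.false_eq_true] at h <;>
    obtain ⟨h1, h2, h3, h4⟩ := h <;> rw [h1, h2, h3, h4] <;> constructor <;> simp [*] <;> ring

/-- The core of part (a). -/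
theorem core (l : ℝ) (hl : 2 ≤ l) (w u : ℕ → Fin 2 → ℝ) (s : ℕ → SP) (k c : ℕ → Bool)
    (hst : ∀ n, FS l (k n) (sg (c n)) (w n) (u n) (w (n + 1)) (u (n + 1)))
    (hnb : ∀ n, ¬ (k (n + 1) = k n ∧ sg (c (n + 1)) = -sg (c n)))
    (hs : ∀ n, w n ∈ Quad (s n))
    (hsm : ∀ ε : ℝ, 0 < ε → ∃ i : ℕ, nrm (w i) < ε)
    (hd : 0 < w 0 0 * u 0 0 + w 0 1 * u 0 1) :
    ∃ i : ℕ, ∀ n, i < n → 1 ≤ n → s (n - 1) = s n → u n ∈ Quad (s n) := by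
  have hq := fun n => (quad_iff (s n) (w n)).1 (hs n)
  have hN0 : ∀ n, 0 < w n 0 ^ 2 + w n 1 ^ 2 := by
    intro n
    have : w n 0 ≠ 0 := by
      intro h
      have := (hq n).1
      rw [h] at this
      simp at this
    positivity
  have hdec : ∀ n, w (n + 1) 0 ^ 2 + w (n + 1) 1 ^ 2 < w n 0 ^ 2 + w n 1 ^ 2 := by
    intro m
    by_contra hcon
    push Not at hcon
    have hmono : ∀ j, w (m + j) 0 ^ 2 + w (m + j) 1 ^ 2 ≤
        w (m + j + 1) 0 ^ 2 + w (m + j + 1) 1 ^ 2 := by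
      intro j
      induction j with
      | zero => exact hcon
      | succ j ih =>
        exact expand_aux hl (sg_cases _) (sg_cases _) (FS_WS (hst (m + j)))
          (FS_WS (hst (m + j + 1))) (hnb _) ih
    have hge : ∀ j, w m 0 ^ 2 + w m 1 ^ 2 ≤ w (m + j) 0 ^ 2 + w (m + j) 1 ^ 2 := by
      intro j
      induction j with
      | zero => exact le_rfl
      | succ j ih => exact ih.trans (hmono j)
    have hmin : ∀ M : ℕ, ∃ δ : ℝ, 0 < δ ∧ ∀ n, n < M → δ ≤ nrm (w n) := by
      intro M
      induction M with
      | zero => exact ⟨1, one_pos, by intro n hn; omega⟩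
      | succ M ih =>
        obtain ⟨δ, h1, h2⟩ := ih
        refine ⟨min δ (nrm (w M)), lt_min h1 (Real.sqrt_pos.2 (hN0 M)), ?_⟩
        intro n hn
        rcases Nat.lt_succ_iff_lt_or_eq.1 hn with h | rfl
        · exact (min_le_left _ _).trans (h2 n h)
        · exact min_le_right _ _
    obtain ⟨δ, h1, h2⟩ := hmin (m + 1)
    obtain ⟨i, hi⟩ := hsm δ h1
    by_cases him : i < m + 1
    · linarith [h2 i him]
    · obtain ⟨j, rfl⟩ := Nat.exists_eq_add_of_le (show m ≤ i by omega)
      have : nrm (w m) ≤ nrm (w (m + j)) := Real.sqrt_le_sqrt (hge j)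
      linarith [h2 m (by omega)]
  set X : ℕ → ℝ := fun n => sg (s n).1 * w n 0 with hX
  set Y : ℕ → ℝ := fun n => sg (s n).2 * w n 1 with hY
  set A : ℕ → ℝ := fun n => sg (s n).1 * u n 0 with hA
  set B : ℕ → ℝ := fun n => sg (s n).2 * u n 1 with hB
  have Xp : ∀ n, 0 < X n := fun n => (hq n).1
  have Yp : ∀ n, 0 < Y n := fun n => (hq n).2
  have step : ∀ n, (HN l (X n) (Y n) (A n) (B n) (X (n + 1)) (Y (n + 1)) (A (n + 1)) (B (n + 1)) ∧
        u (n + 1) 0 = u n 0) ∨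
      (HN l (Y n) (X n) (B n) (A n) (Y (n + 1)) (X (n + 1)) (B (n + 1)) (A (n + 1)) ∧
        u (n + 1) 1 = u n 1) := by
    intro n
    have h := hst n
    cases hk : k n
    · right
      simp only [FS, hk, if_false, Bool.false_eq_true] at h
      exact ⟨(HS_norm hl (sg_cases _) (sg_cases _) (sg_cases _) (sg_cases _) (sg_cases _)
        (Yp n) (Xp n) (Yp (n + 1)) (Xp (n + 1)) h (by linarith [hdec n])).1, h.2.2.1⟩
    · left
      simp only [FS, hk, if_true] at h
      exact ⟨(HS_norm hl (sg_cases _) (sg_cases _) (sg_cases _) (sg_cases _) (sg_cases _)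
        (Xp n) (Yp n) (Xp (n + 1)) (Yp (n + 1)) h (hdec n)).1, h.2.2.1⟩
  have hS : ∀ n, l * X n < 2 * Y n ∨ l * Y n < 2 * X n := by
    intro n
    rcases step n with h | h
    · exact Or.inr h.1.1
    · exact Or.inl h.1.1
  have hdot : ∀ n, A n * X n + B n * Y n = w 0 0 * u 0 0 + w 0 1 * u 0 1 := by
    intro n
    have h1 : A n * X n + B n * Y n = w n 0 * u n 0 + w n 1 * u n 1 := by
      simp only [hX, hY, hA, hB]
      rcases sg_cases (s n).1 with h | h <;> rcases sg_cases (s n).2 with h' | h' <;>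
        rw [h, h'] <;> ring
    rw [h1]
    clear h1
    induction n with
    | zero => rfl
    | succ n ih => rw [FS_dot (hst n), ih]
  have hdp : ∀ n, 0 < A n * X n + B n * Y n := fun n => by rw [hdot]; exact hd
  have hex : ∃ i, GoodSt l (X i) (Y i) (A i) (B i) := by
    by_contra hcon
    push Not at hcon
    have hbd : ∀ n, |A n| ≤ |A 0| ∧ |B n| ≤ |B 0| := by
      intro n
      induction n with
      | zero => exact ⟨le_rfl, le_rfl⟩
      | succ n ih =>
        rcases step n with h | h
        · have := bad_step_H hl (Xp n) (Yp n) (Xp (n + 1)) (hS (n + 1)) (hdp n) (hdp (n + 1)) h.1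
            (hcon n) (hcon (n + 1))
          exact ⟨this.1.trans ih.1, this.2.trans ih.2⟩
        · have := bad_step_H hl (Yp n) (Xp n) (Yp (n + 1)) (hS (n + 1)).symm
            (by linarith [hdp n]) (by linarith [hdp (n + 1)]) h.1
            (fun h => hcon n h.swap) (fun h => hcon (n + 1) h.swap)
          exact ⟨this.2.trans ih.1, this.1.trans ih.2⟩
    have hK : 0 < |A 0| + |B 0| + 1 := by positivity
    obtain ⟨i, hi⟩ := hsm ((w 0 0 * u 0 0 + w 0 1 * u 0 1) / (|A 0| + |B 0| + 1)) (div_pos hd hK)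
    rw [lt_div_iff₀ hK] at hi
    have hXi : X i ≤ nrm (w i) := by
      apply Real.le_sqrt_of_sq_le
      have : X i ^ 2 = w i 0 ^ 2 := by
        simp only [hX]
        rcases sg_cases (s i).1 with h | h <;> rw [h] <;> ring
      rw [this]; nlinarith [sq_nonneg (w i 1)]
    have hYi : Y i ≤ nrm (w i) := by
      apply Real.le_sqrt_of_sq_le
      have : Y i ^ 2 = w i 1 ^ 2 := by
        simp only [hY]
        rcases sg_cases (s i).2 with h | h <;> rw [h] <;> ring
      rw [this]; nlinarith [sq_nonneg (w i 0)]
    have hn : 0 ≤ nrm (w i) := Real.sqrt_nonneg _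
    have e1 : A i * X i ≤ |A 0| * nrm (w i) :=
      mul_le_mul ((le_abs_self _).trans (hbd i).1) hXi (Xp i).le (abs_nonneg _)
    have e2 : B i * Y i ≤ |B 0| * nrm (w i) :=
      mul_le_mul ((le_abs_self _).trans (hbd i).2) hYi (Yp i).le (abs_nonneg _)
    have := hdot i
    nlinarith
  obtain ⟨i, hi⟩ := hex
  have hall : ∀ j, GoodSt l (X (i + j)) (Y (i + j)) (A (i + j)) (B (i + j)) := by
    intro j
    induction j with
    | zero => exact hi
    | succ j ih =>
      rcases step (i + j) with h | h
      · exact good_step_H hl (Xp _) (Yp _) (Xp _) (hS (i + j + 1)) h.1 ih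
      · exact (good_step_H hl (Yp _) (Xp _) (Yp _) (hS (i + j + 1)).symm h.1 ih.swap).swap
  refine ⟨i, ?_⟩
  intro n hin hn hsn
  obtain ⟨j, rfl⟩ := Nat.exists_eq_add_of_lt hin
  simp only [Nat.add_sub_cancel] at hsn
  rw [quad_iff]
  change 0 < A (i + j + 1) ∧ 0 < B (i + j + 1)
  rcases step (i + j) with ⟨h, h2⟩ | ⟨h, h2⟩
  · exact good_crit_H hl (Xp _) (Yp _) h (by simp only [hA]; rw [hsn, h2]) (hall j)
  · exact (good_crit_H hl (Yp _) (Xp _) h (by simp only [hB]; rw [hsn, h2]) (hall j).swap).symm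

theorem stmt13 (l : ℝ) (hl : 2 ≤ l) (x : Fin 2 → ℝ) (hx : x ∈ Circ)
    (hren : Renormalizable l x)
    (g : ℕ → F2) (hg : IsGeodesicRay g) (hgs : IsShrinkingSeq l g x)
    (s : ℕ → SP) (hs : ∀ i, act l (g i) x ∈ Quad (s i))
    (u : Fin 2 → ℝ) (hu : u ≠ 0) :
    (0 < x 0 * u 0 + x 1 * u 1 →
      ∃ i : ℕ, ∀ n : ℕ, i < n → 1 ≤ n → s (n - 1) = s n →
        act l (gammaAut (g n)) u ∈ Quad (s n)) ∧
    (x 0 * u 0 + x 1 * u 1 < 0 →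
      ∃ i : ℕ, ∀ n : ℕ, i < n → 1 ≤ n → s (n - 1) = s n →
        -(act l (gammaAut (g n)) u) ∈ Quad (s n)) ∧
    (x 0 * u 0 + x 1 * u 1 = 0 →
      (∀ n : ℕ, act l (gammaAut (g n)) u ∈ Quad (rPerm (s n))) ∨
      (∀ n : ℕ, act l (gammaAut (g n)) u ∈ Quad (rPermInv (s n)))) := by
  obtain ⟨hg0, hg1, hg2⟩ := hg
  choose k c hkc using fun n => gens_gen (hg1 n)
  have hgn : ∀ n, g (n + 1) = gen (k n) (c n) * g n := fun n => by
    rw [← hkc n]; group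
  have hst : ∀ (z : Fin 2 → ℝ) (n : ℕ), FS l (k n) (sg (c n)) (act l (g n) x)
      (act l (gammaAut (g n)) z) (act l (g (n + 1)) x) (act l (gammaAut (g (n + 1))) z) := by
    intro z n
    rw [hgn n]
    exact gen_FS _ _ _ _ _ _
  have hnb : ∀ n, ¬ (k (n + 1) = k n ∧ sg (c (n + 1)) = -sg (c n)) := by
    rintro n ⟨h1, h2⟩
    apply hg2 n
    have h3 : c (n + 1) = !(c n) := by
      apply sg_inj
      rw [h2]
      cases c n <;> simp [sg]
    rw [show n + 2 = n + 1 + 1 from rfl, hgn (n + 1), hgn n, h1, h3]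
    cases k n <;> cases c n <;> simp [gen]
  have h0x : act l (g 0) x = x := by rw [hg0, act_one]
  have h0u : ∀ z, act l (gammaAut (g 0)) z = z := by intro z; rw [hg0, map_one, act_one]
  refine ⟨?_, ?_, ?_⟩
  · intro hd
    exact core l hl (fun n => act l (g n) x) (fun n => act l (gammaAut (g n)) u) s k c (hst u)
      hnb hs hgs (by simp only [h0x, h0u]; exact hd)
  · intro hd
    have := core l hl (fun n => act l (g n) x) (fun n => act l (gammaAut (g n)) (-u)) s k c
      (hst (-u)) hnb hs hgs (by simp only [h0x, h0u, Pi.neg_apply]; linarith)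
    simpa only [act_neg] using this
  · intro hd
    have hx1 : x 0 ^ 2 + x 1 ^ 2 = 1 := by
      have h : Real.sqrt (x 0 ^ 2 + x 1 ^ 2) = 1 := hx
      rwa [Real.sqrt_eq_one] at h
    obtain ⟨d, hdd⟩ : ∃ d, d = x 0 * u 1 - x 1 * u 0 := ⟨_, rfl⟩
    have e0 : u 0 = -d * x 1 := by
      rw [hdd]
      linear_combination (-u 0) * hx1 + x 0 * hd
    have e1 : u 1 = d * x 0 := by
      rw [hdd]
      linear_combination (-u 1) * hx1 + x 1 * hd
    have hdne : d ≠ 0 := by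
      intro h
      apply hu
      ext i
      fin_cases i
      · simp [e0, h]
      · simp [e1, h]
    have hall : ∀ n, act l (gammaAut (g n)) u 0 = -d * act l (g n) x 1 ∧
        act l (gammaAut (g n)) u 1 = d * act l (g n) x 0 := by
      intro n
      induction n with
      | zero => rw [h0x, h0u]; exact ⟨e0, e1⟩
      | succ n ih => exact FS_rot (hst u n) ih.1 ih.2
    have sgn : ∀ b, sg (!b) = -sg b := by intro b; cases b <;> simp [sg]
    rcases lt_or_gt_of_ne hdne with h | h
    · right
      intro n
      have h1 := (quad_iff _ _).1 (hs n)
      rw [quad_iff, (hall n).1, (hall n).2]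
      simp only [rPermInv, sgn]
      constructor
      · have := mul_pos (neg_pos.2 h) h1.2; linarith
      · have := mul_pos (neg_pos.2 h) h1.1; linarith
    · left
      intro n
      have h1 := (quad_iff _ _).1 (hs n)
      rw [quad_iff, (hall n).1, (hall n).2]
      simp only [rPerm, sgn]
      constructor
      · have := mul_pos h h1.2; linarith
      · have := mul_pos h h1.1; linarith
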